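/- For every k ≥ 1, the infimum λ_k* = inf_{a ≥ 1} λ_k(a) of the k-th Dirichlet biharmonic eigenvalue over rectangles of unit area is attained: there exists a_k* ≥ 1 with λ_k(a_k*) = λ_k*. In particular λ_k(a) → ∞ as a → ∞ for each fixed k. -/

import Mathlib

open MeasureTheory Real Filter

noncomputable section

/-- Directional (partial) derivative of `u : ℝ × ℝ → ℝ` in direction `v`. -/
def pd (v : ℝ × ℝ) (u : ℝ × ℝ → ℝ) : ℝ × ℝ → ℝ := fun p => fderiv ℝ u p v

/-- Second partial derivative `∂²u/∂x²`. -/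
def uxx (u : ℝ × ℝ → ℝ) : ℝ × ℝ → ℝ := pd (1, 0) (pd (1, 0) u)

/-- Second partial derivative `∂²u/∂y²`. -/
def uyy (u : ℝ × ℝ → ℝ) : ℝ × ℝ → ℝ := pd (0, 1) (pd (0, 1) u)

/-- Mixed second partial derivative `∂²u/∂x∂y`. -/
def uxy (u : ℝ × ℝ → ℝ) : ℝ × ℝ → ℝ := pd (0, 1) (pd (1, 0) u)

/-- The Laplacian `Δu = u_xx + u_yy`. -/
def lap (u : ℝ × ℝ → ℝ) : ℝ × ℝ → ℝ := fun p => uxx u p + uyy u p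

/-- The open rectangle `R_a = (0,a) × (0,1/a)` of unit area. -/
def Rect (a : ℝ) : Set (ℝ × ℝ) := Set.Ioo 0 a ×ˢ Set.Ioo 0 (1 / a)

/-- Admissible test functions: smooth, compactly supported inside `Ω`. -/
def Adm (Ω : Set (ℝ × ℝ)) (u : ℝ × ℝ → ℝ) : Prop :=
  ContDiff ℝ (⊤ : ℕ∞) u ∧ HasCompactSupport u ∧ tsupport u ⊆ Ω

/-- First Dirichlet eigenvalue of the biharmonic operator on `R_a`,
characterized variationally as the infimum of the Rayleigh quotient. -/
def lam1 (a : ℝ) : ℝ :=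
  sInf { μ | ∃ u : ℝ × ℝ → ℝ, Adm (Rect a) u ∧ u ≠ 0 ∧
    μ = (∫ p, (lap u p) ^ 2) / (∫ p, (u p) ^ 2) }

/-- `k`-th Dirichlet eigenvalue of the biharmonic operator on `R_a`:
infimum over linearly independent `k`-tuples of admissible functions of the
maximum of the Rayleigh quotient over nonzero linear combinations. -/
def lamk (k : ℕ) (a : ℝ) : ℝ :=
  sInf { μ | ∃ u : Fin k → (ℝ × ℝ → ℝ), (∀ i, Adm (Rect a) (u i)) ∧
    LinearIndependent ℝ u ∧
    μ = sSup { r | ∃ c : Fin k → ℝ, c ≠ 0 ∧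
      r = (∫ p, (lap (fun q => ∑ i, c i * u i q) p) ^ 2) /
          (∫ p, (∑ i, c i * u i p) ^ 2) } }

/-- Smooth compactly supported functions on the plane. -/
structure IsTest (u : ℝ × ℝ → ℝ) : Prop where
  smooth : ContDiff ℝ (⊤ : ℕ∞) u
  compact : HasCompactSupport u

namespace IsTest

variable {u w : ℝ × ℝ → ℝ}

lemma continuous (hu : IsTest u) : Continuous u := hu.smooth.continuous

lemma differentiable (hu : IsTest u) : Differentiable ℝ u :=
  hu.smooth.differentiable (by simp)

lemma integrable (hu : IsTest u) : Integrable u :=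
  hu.continuous.integrable_of_hasCompactSupport hu.compact

lemma pd (hu : IsTest u) (v : ℝ × ℝ) : IsTest (pd v u) where
  smooth := (hu.smooth.fderiv_right (m := (⊤ : ℕ∞)) (by simp)).clm_apply contDiff_const
  compact := hu.compact.fderiv_apply ℝ v

lemma add (hu : IsTest u) (hw : IsTest w) : IsTest (fun p => u p + w p) :=
  ⟨hu.smooth.add hw.smooth, hu.compact.add hw.compact⟩

lemma mul_left (hw : IsTest w) (hu : ContDiff ℝ (⊤ : ℕ∞) u) : IsTest (fun p => u p * w p) :=
  ⟨hu.mul hw.smooth, hw.compact.mul_left⟩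

lemma mul (hu : IsTest u) (hw : IsTest w) : IsTest (fun p => u p * w p) :=
  hw.mul_left hu.smooth

lemma const_mul (hw : IsTest w) (c : ℝ) : IsTest (fun p => c * w p) :=
  hw.mul_left contDiff_const

lemma sq (hu : IsTest u) : IsTest (fun p => u p ^ 2) := by
  simpa only [pow_two] using hu.mul hu

lemma sum {ι : Type*} [Fintype ι] {f : ι → ℝ × ℝ → ℝ} (hf : ∀ i, IsTest (f i)) (c : ι → ℝ) :
    IsTest (fun p => ∑ i, c i * f i p) := by
  refine ⟨ContDiff.sum fun i _ => ((hf i).const_mul (c i)).smooth, ?_⟩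
  have : HasCompactSupport (∑ i, fun p => c i * f i p) :=
    Finset.sum_induction _ HasCompactSupport (fun _ _ h₁ h₂ => h₁.add h₂) HasCompactSupport.zero
      fun i _ => ((hf i).const_mul (c i)).compact
  convert this using 1
  ext p
  simp

lemma uxx (hu : IsTest u) : IsTest (uxx u) := (hu.pd _).pd _

lemma uyy (hu : IsTest u) : IsTest (uyy u) := (hu.pd _).pd _

lemma uxy (hu : IsTest u) : IsTest (uxy u) := (hu.pd _).pd _

lemma lap (hu : IsTest u) : IsTest (lap u) := hu.uxx.add hu.uyy

/-- Integration by parts for test functions. -/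
lemma integral_mul_pd (hu : IsTest u) (hw : IsTest w) (v : ℝ × ℝ) :
    ∫ p, u p * _root_.pd v w p = -∫ p, _root_.pd v u p * w p :=
  integral_mul_fderiv_eq_neg_fderiv_mul_of_integrable
    ((hu.pd v).mul hw).integrable (hu.mul (hw.pd v)).integrable (hu.mul hw).integrable
    (fun x _ => hu.differentiable x) (fun x _ => hw.differentiable x)

lemma pd_comm (hu : IsTest u) (v w : ℝ × ℝ) :
    _root_.pd v (_root_.pd w u) = _root_.pd w (_root_.pd v u) := by
  funext p
  have hd : DifferentiableAt ℝ (fderiv ℝ u) p :=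
    (hu.smooth.fderiv_right (m := (⊤ : ℕ∞)) (by simp)).differentiable (by simp) p
  have key : ∀ a b : ℝ × ℝ, _root_.pd a (_root_.pd b u) p = fderiv ℝ (fderiv ℝ u) p a b := by
    intro a b
    have h := (hd.hasFDerivAt.clm_apply (hasFDerivAt_const b p)).fderiv
    unfold _root_.pd
    rw [h]
    simp
  rw [key, key]
  exact second_derivative_symmetric (fun y => (hu.differentiable y).hasFDerivAt) hd.hasFDerivAt v w

lemma integral_uxx_mul_uyy (hu : IsTest u) :
    ∫ p, _root_.uxx u p * _root_.uyy u p = ∫ p, _root_.uxy u p ^ 2 := by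
  have h1 := (hu.pd (1, 0)).integral_mul_pd hu.uyy (1, 0)
  have h2 := (hu.pd (1, 0)).integral_mul_pd hu.uxy (0, 1)
  have h3 : _root_.pd (1, 0) (_root_.uyy u) = _root_.pd (0, 1) (_root_.uxy u) := by
    unfold _root_.uyy _root_.uxy
    rw [(hu.pd _).pd_comm, hu.pd_comm (1, 0)]
  rw [h3] at h1
  have h4 := neg_injective (h1.symm.trans h2)
  simp only [pow_two]
  exact h4

lemma integral_mul_lap (hu : IsTest u) :
    ∫ p, u p * _root_.lap u p =
      -((∫ p, _root_.pd (1, 0) u p ^ 2) + ∫ p, _root_.pd (0, 1) u p ^ 2) := by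
  have h1 := hu.integral_mul_pd (hu.pd (1, 0)) (1, 0)
  have h2 := hu.integral_mul_pd (hu.pd (0, 1)) (0, 1)
  simp only [_root_.lap, mul_add, pow_two]
  rw [integral_add (hu.mul hu.uxx).integrable (hu.mul hu.uyy).integrable]
  unfold _root_.uxx _root_.uyy
  rw [h1, h2]
  ring

/-- Poincaré inequality for test functions supported in a strip of width `h`. -/
lemma integral_sq_le_pd (hu : IsTest u) {h : ℝ} (hs : ∀ p ∈ tsupport u, |p.2| ≤ h) :
    ∫ p, u p ^ 2 ≤ 4 * h ^ 2 * ∫ p, _root_.pd (0, 1) u p ^ 2 := by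
  have hy : IsTest (fun p : ℝ × ℝ => p.2 * u p) := hu.mul_left contDiff_snd
  have hd : _root_.pd (0, 1) (fun p : ℝ × ℝ => p.2 * u p) =
      fun p => u p + p.2 * _root_.pd (0, 1) u p := by
    funext p
    have := ((hasFDerivAt_snd (𝕜 := ℝ) (p := p)).mul (hu.differentiable p).hasFDerivAt).fderiv
    unfold _root_.pd
    erw [this]
    simp
    ring
  have h1 := hu.integral_mul_pd hy (0, 1)
  rw [hd] at h1
  have hb : IsTest (fun p : ℝ × ℝ => u p * (p.2 * _root_.pd (0, 1) u p)) :=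
    hu.mul ((hu.pd _).mul_left contDiff_snd)
  have h2 : ∫ p, u p * (u p + p.2 * _root_.pd (0, 1) u p) =
      (∫ p, u p ^ 2) + ∫ p, u p * (p.2 * _root_.pd (0, 1) u p) := by
    rw [← integral_add hu.sq.integrable hb.integrable]
    congr 1; funext p; ring
  have h3 : ∫ p, _root_.pd (0, 1) u p * (p.2 * u p) =
      ∫ p, u p * (p.2 * _root_.pd (0, 1) u p) := by
    congr 1; funext p; ring
  rw [h2, h3] at h1
  have h4 : ∫ p, -2 * (u p * (p.2 * _root_.pd (0, 1) u p)) ≤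
      ∫ p, ((1 / 2) * u p ^ 2 + (2 * h ^ 2) * _root_.pd (0, 1) u p ^ 2) := by
    refine integral_mono (hb.const_mul _).integrable
      ((hu.sq.const_mul _).add ((hu.pd _).sq.const_mul _)).integrable fun p => ?_
    by_cases hp : p ∈ tsupport u
    · have h5 : p.2 ^ 2 ≤ h ^ 2 := sq_le_sq' (abs_le.1 (hs p hp)).1 (abs_le.1 (hs p hp)).2
      have h6 := mul_le_mul_of_nonneg_right h5 (sq_nonneg (_root_.pd (0, 1) u p))
      dsimp only
      nlinarith [sq_nonneg (u p + 2 * (p.2 * _root_.pd (0, 1) u p))]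
    · have : u p = 0 := image_eq_zero_of_notMem_tsupport hp
      simp only [this]
      have := sq_nonneg (h * _root_.pd (0, 1) u p)
      nlinarith
  rw [integral_const_mul, integral_add (hu.sq.const_mul _).integrable
    ((hu.pd _).sq.const_mul _).integrable, integral_const_mul, integral_const_mul] at h4
  linarith

lemma integral_sq_le_lap (hu : IsTest u) {h : ℝ} (hs : ∀ p ∈ tsupport u, |p.2| ≤ h) :
    ∫ p, u p ^ 2 ≤ 16 * h ^ 4 * ∫ p, _root_.lap u p ^ 2 := by
  have h1 := hu.integral_sq_le_pd hs
  have h2 := hu.integral_mul_lap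
  have h3 : 0 ≤ ∫ p, _root_.pd (1, 0) u p ^ 2 := integral_nonneg fun p => sq_nonneg _
  have h4 : ∫ p, -(4 * h ^ 2) * (u p * _root_.lap u p) ≤
      ∫ p, ((1 / 2) * u p ^ 2 + (8 * h ^ 4) * _root_.lap u p ^ 2) := by
    refine integral_mono ((hu.mul hu.lap).const_mul _).integrable
      ((hu.sq.const_mul _).add (hu.lap.sq.const_mul _)).integrable fun p => ?_
    dsimp only
    nlinarith [sq_nonneg (u p + 4 * h ^ 2 * _root_.lap u p)]
  rw [integral_const_mul, integral_add (hu.sq.const_mul _).integrable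
    (hu.lap.sq.const_mul _).integrable, integral_const_mul, integral_const_mul] at h4
  nlinarith [mul_nonneg (sq_nonneg h) h3]

lemma comp_scale (hu : IsTest u) {t s : ℝ} (ht : t ≠ 0) (hs : s ≠ 0) :
    IsTest (fun p : ℝ × ℝ => u (t * p.1, s * p.2)) where
  smooth := hu.smooth.comp ((contDiff_const.mul contDiff_fst).prodMk
    (contDiff_const.mul contDiff_snd))
  compact := hu.compact.comp_homeomorph
    ((Homeomorph.mulLeft₀ t ht).prodCongr (Homeomorph.mulLeft₀ s hs))

lemma pd_comp_scale (hu : IsTest u) (t s a b : ℝ) :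
    _root_.pd (a, b) (fun p : ℝ × ℝ => u (t * p.1, s * p.2)) =
      fun p => _root_.pd (t * a, s * b) u (t * p.1, s * p.2) := by
  funext p
  have h := (hu.differentiable (t * p.1, s * p.2)).hasFDerivAt.comp p
    (((hasFDerivAt_fst (𝕜 := ℝ) (p := p)).const_mul t).prodMk
      ((hasFDerivAt_snd (𝕜 := ℝ) (p := p)).const_mul s))
  unfold _root_.pd
  erw [h.fderiv]
  simp

lemma lap_comp_scale (hu : IsTest u) (t s : ℝ) :
    _root_.lap (fun p : ℝ × ℝ => u (t * p.1, s * p.2)) =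
      fun p => t ^ 2 * _root_.uxx u (t * p.1, s * p.2) + s ^ 2 * _root_.uyy u (t * p.1, s * p.2) := by
  have smul : ∀ (c : ℝ) (v : ℝ × ℝ) (w : ℝ × ℝ → ℝ), _root_.pd (c • v) w = c • _root_.pd v w := by
    intro c v w; funext p; simp [_root_.pd]
  have hx : ((t * 1, s * 0) : ℝ × ℝ) = t • (1, 0) := by simp
  have hy : ((t * 0, s * 1) : ℝ × ℝ) = s • (0, 1) := by simp
  have smul' : ∀ (c : ℝ) (v : ℝ × ℝ) {w : ℝ × ℝ → ℝ}, IsTest w →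
      _root_.pd v (c • w) = c • _root_.pd v w := by
    intro c v w hw; funext p
    simp [_root_.pd, fderiv_const_smul (hw.differentiable p)]
  have hc : ∀ (c : ℝ) {w : ℝ × ℝ → ℝ}, IsTest w → IsTest (c • w) := fun c _ hw => hw.const_mul c
  funext p
  unfold _root_.lap _root_.uxx _root_.uyy
  rw [hu.pd_comp_scale t s 1 0, hu.pd_comp_scale t s 0 1, hx, hy, smul, smul,
    (hc t (hu.pd (1, 0))).pd_comp_scale t s 1 0, (hc s (hu.pd (0, 1))).pd_comp_scale t s 0 1,
    hx, hy, smul, smul, smul' _ _ (hu.pd _), smul' _ _ (hu.pd _)]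
  simp only [Pi.smul_apply, smul_eq_mul]
  ring

lemma integral_comp_scale (hu : IsTest u) {t s : ℝ} (ht : 0 < t) (hts : t * s = 1) :
    ∫ p : ℝ × ℝ, u (t * p.1, s * p.2) = ∫ p, u p := by
  have hs : 0 < s := by
    by_contra hs
    nlinarith
  have hc : IsTest (fun p : ℝ × ℝ => u (t * p.1, s * p.2)) := hu.comp_scale ht.ne' hs.ne'
  rw [Measure.volume_eq_prod, integral_prod _ hc.integrable, integral_prod _ hu.integrable]
  have hin : ∀ x : ℝ, ∫ y, u (t * x, s * y) = |s⁻¹| • ∫ y, u (t * x, y) := fun x =>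
    Measure.integral_comp_mul_left (fun y => u (t * x, y)) s
  simp only [hin]
  rw [integral_smul, Measure.integral_comp_mul_left (fun x => ∫ y, u (x, y)) t, smul_smul, ← abs_mul,
    ← mul_inv, mul_comm s t, hts]
  simp

lemma integral_sq_add (hu : IsTest u) (hw : IsTest w) (a b : ℝ) :
    ∫ p, (a * u p + b * w p) ^ 2 =
      a ^ 2 * (∫ p, u p ^ 2) + 2 * (a * b) * (∫ p, u p * w p) + b ^ 2 * ∫ p, w p ^ 2 := by
  rw [← integral_const_mul, ← integral_const_mul, ← integral_const_mul,
    ← integral_add (hu.sq.const_mul _).integrable ((hu.mul hw).const_mul _).integrable,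
    ← integral_add ((hu.sq.const_mul _).add ((hu.mul hw).const_mul _)).integrable
      (hw.sq.const_mul _).integrable]
  congr 1; funext p; ring

lemma integral_lap_comp_scale_le (hu : IsTest u) {t s M : ℝ} (ht : 0 < t) (hts : t * s = 1)
    (hM : 1 ≤ M) (htM : t ^ 4 ≤ M) (hsM : s ^ 4 ≤ M) :
    ∫ p, _root_.lap (fun q : ℝ × ℝ => u (t * q.1, s * q.2)) p ^ 2 ≤
      M * ∫ p, _root_.lap u p ^ 2 := by
  have h1 := ((hu.uxx.const_mul (t ^ 2)).add (hu.uyy.const_mul (s ^ 2))).sq.integral_comp_scale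
    ht hts
  have h2 := hu.uxx.integral_sq_add hu.uyy 1 1
  have hX : 0 ≤ ∫ p, _root_.uxx u p ^ 2 := integral_nonneg fun p => sq_nonneg _
  have hZ : 0 ≤ ∫ p, _root_.uyy u p ^ 2 := integral_nonneg fun p => sq_nonneg _
  have hY : 0 ≤ ∫ p, _root_.uxx u p * _root_.uyy u p := by
    rw [hu.integral_uxx_mul_uyy]
    exact integral_nonneg fun p => sq_nonneg _
  rw [hu.uxx.integral_sq_add hu.uyy] at h1
  rw [hu.lap_comp_scale, h1]
  simp only [one_mul] at h2
  unfold _root_.lap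
  rw [h2, ← mul_pow, hts]
  have e1 := mul_le_mul_of_nonneg_right htM hX
  have e2 := mul_le_mul_of_nonneg_right hM hY
  have e3 := mul_le_mul_of_nonneg_right hsM hZ
  nlinarith

lemma integral_sq_pos (hu : IsTest u) (h0 : u ≠ 0) : 0 < ∫ p, u p ^ 2 := by
  obtain ⟨x, hx⟩ := Function.ne_iff.1 h0
  exact hu.sq.continuous.integral_pos_of_hasCompactSupport_nonneg_nonzero hu.sq.compact
    (fun p => sq_nonneg _) (pow_ne_zero 2 hx)

lemma pd_sum {ι : Type*} [Fintype ι] {f : ι → ℝ × ℝ → ℝ} (hf : ∀ i, IsTest (f i)) (c : ι → ℝ)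
    (v : ℝ × ℝ) :
    _root_.pd v (fun p => ∑ i, c i * f i p) = fun p => ∑ i, c i * _root_.pd v (f i) p := by
  funext p
  unfold _root_.pd
  rw [fderiv_fun_sum fun i _ => ((hf i).const_mul (c i)).differentiable p]
  simp [fderiv_const_mul ((hf _).differentiable p)]

lemma lap_sum {ι : Type*} [Fintype ι] {f : ι → ℝ × ℝ → ℝ} (hf : ∀ i, IsTest (f i)) (c : ι → ℝ) :
    _root_.lap (fun p => ∑ i, c i * f i p) = fun p => ∑ i, c i * _root_.lap (f i) p := by
  unfold _root_.lap _root_.uxx _root_.uyy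
  simp only [pd_sum hf, pd_sum (fun i => (hf i).pd _), mul_add, Finset.sum_add_distrib]

lemma continuous_integral_sum_sq {ι : Type*} [Fintype ι] {f : ι → ℝ × ℝ → ℝ}
    (hf : ∀ i, IsTest (f i)) : Continuous fun c : ι → ℝ => ∫ p, (∑ i, c i * f i p) ^ 2 := by
  have : (fun c : ι → ℝ => ∫ p, (∑ i, c i * f i p) ^ 2) =
      fun c => ∑ i, ∑ j, c i * c j * ∫ p, f i p * f j p := by
    funext c
    simp only [← integral_const_mul]
    have hI : ∀ i j, Integrable fun p => c i * c j * (f i p * f j p) := fun i j =>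
      (((hf i).mul (hf j)).const_mul _).integrable
    simp only [← integral_finsetSum _ fun j _ => hI _ j]
    rw [← integral_finsetSum _ fun i _ => integrable_finsetSum _ fun j _ => hI i j]
    congr 1; funext p
    rw [pow_two, Finset.sum_mul_sum]
    refine Finset.sum_congr rfl fun i _ => Finset.sum_congr rfl fun j _ => ?_
    ring
  rw [this]
  fun_prop

end IsTest

lemma Adm.isTest {Ω : Set (ℝ × ℝ)} {u : ℝ × ℝ → ℝ} (hu : Adm Ω u) : IsTest u := ⟨hu.1, hu.2.1⟩

/-- The values of the Rayleigh quotient on the nonzero linear combinations of `u`. -/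
def rayleighSet {k : ℕ} (u : Fin k → (ℝ × ℝ → ℝ)) : Set ℝ :=
  { r | ∃ c : Fin k → ℝ, c ≠ 0 ∧
      r = (∫ p, (lap (fun q => ∑ i, c i * u i q) p) ^ 2) /
          (∫ p, (∑ i, c i * u i p) ^ 2) }

/-- The maximal Rayleigh quotients of linearly independent admissible `k`-tuples. -/
def maxRayleighSet (k : ℕ) (a : ℝ) : Set ℝ :=
  { μ | ∃ u : Fin k → (ℝ × ℝ → ℝ), (∀ i, Adm (Rect a) (u i)) ∧
    LinearIndependent ℝ u ∧ μ = sSup (rayleighSet u) }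

lemma lamk_eq (k : ℕ) (a : ℝ) : lamk k a = sInf (maxRayleighSet k a) := rfl

section Tuple

variable {k : ℕ} {u : Fin k → (ℝ × ℝ → ℝ)}

lemma sum_ne_zero_of_linearIndependent (hl : LinearIndependent ℝ u) {c : Fin k → ℝ} (hc : c ≠ 0) :
    (fun p => ∑ i, c i * u i p) ≠ 0 := by
  intro h
  refine hc (funext fun i => Fintype.linearIndependent_iff.1 hl c ?_ i)
  rw [← h]
  ext p
  simp

lemma rayleighSet_nonempty (hk : 1 ≤ k) (u : Fin k → (ℝ × ℝ → ℝ)) : (rayleighSet u).Nonempty :=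
  ⟨_, fun _ => 1, fun h => one_ne_zero (congrFun h ⟨0, hk⟩), rfl⟩

lemma nonneg_of_mem_rayleighSet {r : ℝ} (hr : r ∈ rayleighSet u) : 0 ≤ r := by
  obtain ⟨c, -, rfl⟩ := hr
  exact div_nonneg (integral_nonneg fun p => sq_nonneg _) (integral_nonneg fun p => sq_nonneg _)

lemma bddAbove_rayleighSet (hu : ∀ i, IsTest (u i)) (hl : LinearIndependent ℝ u) :
    BddAbove (rayleighSet u) := by
  let A : (Fin k → ℝ) → ℝ := fun c => ∫ p, (∑ i, c i * u i p) ^ 2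
  let B : (Fin k → ℝ) → ℝ := fun c => ∫ p, (∑ i, c i * lap (u i) p) ^ 2
  have hA : Continuous A := IsTest.continuous_integral_sum_sq hu
  have hB : Continuous B := IsTest.continuous_integral_sum_sq fun i => (hu i).lap
  have hA0 : ∀ c, c ≠ 0 → A c ≠ 0 := fun c hc =>
    ((IsTest.sum hu c).integral_sq_pos (sum_ne_zero_of_linearIndependent hl hc)).ne'
  have hcont : ContinuousOn (fun c => B c / A c) (Metric.sphere (0 : Fin k → ℝ) 1) :=
    hB.continuousOn.div hA.continuousOn fun c hc => hA0 c (ne_zero_of_mem_unit_sphere ⟨c, hc⟩)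
  obtain ⟨K, hK⟩ := (isCompact_sphere (0 : Fin k → ℝ) 1).bddAbove_image hcont
  refine ⟨K, ?_⟩
  rintro _ ⟨c, hc, rfl⟩
  have hn : ‖c‖ ≠ 0 := norm_ne_zero_iff.2 hc
  have hmem : ‖c‖⁻¹ • c ∈ Metric.sphere (0 : Fin k → ℝ) 1 := by
    simp [norm_smul, hn]
  have hsm : ∀ (f : Fin k → (ℝ × ℝ → ℝ)) (t : ℝ),
      ∫ p, (∑ i, (t • c) i * f i p) ^ 2 = t ^ 2 * ∫ p, (∑ i, c i * f i p) ^ 2 := by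
    intro f t
    rw [← integral_const_mul]
    simp [mul_assoc, ← Finset.mul_sum, mul_pow]
  have h := hK ⟨_, hmem, rfl⟩
  simp only [A, B, hsm] at h
  rw [mul_div_mul_left _ _ (pow_ne_zero 2 (inv_ne_zero hn))] at h
  rw [IsTest.lap_sum hu]
  exact h

end Tuple

lemma nonneg_of_mem_maxRayleighSet {k : ℕ} {a μ : ℝ} (hμ : μ ∈ maxRayleighSet k a) : 0 ≤ μ := by
  obtain ⟨u, -, -, rfl⟩ := hμ
  exact Real.sSup_nonneg fun r hr => nonneg_of_mem_rayleighSet hr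

lemma maxRayleighSet_nonempty (k : ℕ) {a : ℝ} (ha : 0 < a) : (maxRayleighSet k a).Nonempty := by
  let P : Fin k → ℝ × ℝ := fun i => ((i + 1) / (k + 1) * a, 1 / a / 2)
  have hk : (0 : ℝ) < k + 1 := by positivity
  have hPinj : Function.Injective P := by
    intro i j h
    have h1 := congrArg Prod.fst h
    simp only [P] at h1
    have h2 := mul_right_cancel₀ ha.ne' h1
    rw [div_left_inj' hk.ne'] at h2
    exact Fin.ext (by exact_mod_cast add_right_cancel h2)
  have hP : ∀ i, P i ∈ Rect a := by
    intro i
    have hi : ((i : ℕ) : ℝ) + 1 < k + 1 := by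
      have : ((i : ℕ) : ℝ) < k := by exact_mod_cast i.2
      linarith
    refine ⟨⟨by simp only [P]; positivity, ?_⟩, ⟨by simp only [P]; positivity, ?_⟩⟩
    · simp only [P]
      exact mul_lt_of_lt_one_left ha ((div_lt_one hk).2 hi)
    · exact half_lt_self (by positivity)
  have hopen : IsOpen (Rect a) := isOpen_Ioo.prod isOpen_Ioo
  have hex : ∀ i, ∃ f : ℝ × ℝ → ℝ, tsupport f ⊆ Rect a ∩ (P '' {i}ᶜ)ᶜ ∧ HasCompactSupport f ∧
      ContDiff ℝ (⊤ : ℕ∞) f ∧ Set.range f ⊆ Set.Icc 0 1 ∧ f (P i) = 1 := by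
    intro i
    refine exists_contDiff_tsupport_subset (IsOpen.mem_nhds
      (hopen.inter (Set.toFinite _).isClosed.isOpen_compl) ⟨hP i, ?_⟩)
    rintro ⟨j, hj, hji⟩
    exact hj (hPinj hji)
  choose f hf using hex
  refine ⟨_, f, fun i => ⟨(hf i).2.2.1, (hf i).2.1, (hf i).1.trans Set.inter_subset_left⟩, ?_, rfl⟩
  rw [Fintype.linearIndependent_iff]
  intro c hc j
  have h := congrFun hc (P j)
  rw [Finset.sum_apply, Finset.sum_eq_single j] at h
  · simpa [(hf j).2.2.2.2] using h
  · intro i _ hij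
    have : f i (P j) = 0 := image_eq_zero_of_notMem_tsupport fun hm =>
      ((hf i).1 hm).2 ⟨j, hij.symm, rfl⟩
    simp [this]
  · simp

lemma lamk_nonneg (k : ℕ) (a : ℝ) : 0 ≤ lamk k a :=
  Real.sInf_nonneg fun _ hμ => nonneg_of_mem_maxRayleighSet hμ

lemma Adm.comp_scale {a b : ℝ} (ha : 0 < a) (hb : 0 < b) {u : ℝ × ℝ → ℝ} (hu : Adm (Rect a) u) :
    Adm (Rect b) (fun p => u (a / b * p.1, b / a * p.2)) := by
  have hT := hu.isTest.comp_scale (div_pos ha hb).ne' (div_pos hb ha).ne'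
  refine ⟨hT.smooth, hT.compact, fun p hp => ?_⟩
  have hc : Continuous fun p : ℝ × ℝ => (a / b * p.1, b / a * p.2) := by fun_prop
  have h1 := hu.2.2 (tsupport_comp_subset_preimage u hc hp)
  obtain ⟨⟨h2, h3⟩, ⟨h4, h5⟩⟩ := h1
  dsimp only at h2 h3 h4 h5
  refine ⟨⟨pos_of_mul_pos_right h2 (div_pos ha hb).le, ?_⟩,
    ⟨pos_of_mul_pos_right h4 (div_pos hb ha).le, ?_⟩⟩
  · rw [div_mul_eq_mul_div, div_lt_iff₀ hb] at h3
    exact lt_of_mul_lt_mul_left h3 ha.le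
  · rw [div_mul_eq_mul_div, div_lt_div_iff_of_pos_right ha] at h5
    rwa [lt_div_iff₀' hb]

lemma lamk_le_mul {k : ℕ} (hk : 1 ≤ k) {a b M : ℝ} (ha : 0 < a) (hb : 0 < b) (hM : 1 ≤ M)
    (h₁ : (a / b) ^ 4 ≤ M) (h₂ : (b / a) ^ 4 ≤ M) : lamk k b ≤ M * lamk k a := by
  have hM0 : 0 < M := one_pos.trans_le hM
  have hab : a / b * (b / a) = 1 := by field_simp
  rw [← div_le_iff₀' hM0, lamk_eq k a]
  refine le_csInf (maxRayleighSet_nonempty k ha) ?_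
  rintro _ ⟨u, hu, hl, rfl⟩
  rw [div_le_iff₀' hM0]
  have hT := fun i => (hu i).isTest
  let v : Fin k → (ℝ × ℝ → ℝ) := fun i p => u i (a / b * p.1, b / a * p.2)
  have hvl : LinearIndependent ℝ v := by
    rw [Fintype.linearIndependent_iff] at hl ⊢
    intro c hc
    refine hl c (funext fun p => ?_)
    have h := congrFun hc (b / a * p.1, a / b * p.2)
    have e1 : a / b * (b / a * p.1) = p.1 := by field_simp
    have e2 : b / a * (a / b * p.2) = p.2 := by field_simp
    simpa [v, e1, e2] using h
  refine (csInf_le ⟨0, fun _ h => nonneg_of_mem_maxRayleighSet h⟩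
    ⟨v, fun i => (hu i).comp_scale ha hb, hvl, rfl⟩).trans ?_
  refine csSup_le (rayleighSet_nonempty hk v) ?_
  rintro _ ⟨c, hc, rfl⟩
  have hw := IsTest.sum hT c
  have hle := le_csSup (bddAbove_rayleighSet hT hl) ⟨c, hc, rfl⟩
  refine le_trans ?_ (mul_le_mul_of_nonneg_left hle hM0.le)
  have hden : ∫ p, (∑ i, c i * v i p) ^ 2 = ∫ p, (∑ i, c i * u i p) ^ 2 :=
    hw.sq.integral_comp_scale (div_pos ha hb) hab
  rw [hden, ← mul_div_assoc]
  exact div_le_div_of_nonneg_right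
    (hw.integral_lap_comp_scale_le (div_pos ha hb) hab hM h₁ h₂)
    (integral_nonneg fun p => sq_nonneg _)

lemma tsupport_sum_subset {k : ℕ} {Ω : Set (ℝ × ℝ)} {u : Fin k → (ℝ × ℝ → ℝ)}
    (hu : ∀ i, tsupport (u i) ⊆ Ω) (c : Fin k → ℝ) :
    tsupport (fun p => ∑ i, c i * u i p) ⊆ Ω := by
  have h : tsupport (fun p => ∑ i, c i * u i p) ⊆ ⋃ i, tsupport (u i) := by
    refine closure_minimal (fun p hp => ?_) (isClosed_iUnion_of_finite fun i => isClosed_closure)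
    obtain ⟨i, -, hi⟩ := Finset.exists_ne_zero_of_sum_ne_zero hp
    exact Set.mem_iUnion.2 ⟨i, subset_closure (right_ne_zero_of_mul hi)⟩
  exact h.trans (Set.iUnion_subset hu)

lemma pow_four_div_le_lamk {k : ℕ} (hk : 1 ≤ k) {a : ℝ} (ha : 0 < a) : a ^ 4 / 16 ≤ lamk k a := by
  refine le_csInf (maxRayleighSet_nonempty k ha) ?_
  rintro _ ⟨u, hu, hl, rfl⟩
  have hT := fun i => (hu i).isTest
  obtain ⟨r, hr⟩ := rayleighSet_nonempty hk u
  refine le_trans ?_ (le_csSup (bddAbove_rayleighSet hT hl) hr)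
  obtain ⟨c, hc, rfl⟩ := hr
  have hw := IsTest.sum hT c
  have hpos := hw.integral_sq_pos (sum_ne_zero_of_linearIndependent hl hc)
  have hP := hw.integral_sq_le_lap (h := 1 / a) fun p hp => by
    have h := (tsupport_sum_subset (fun i => (hu i).2.2) c hp).2
    rw [abs_of_pos h.1]
    exact h.2.le
  rw [le_div_iff₀ hpos]
  calc a ^ 4 / 16 * _ ≤ a ^ 4 / 16 * _ := mul_le_mul_of_nonneg_left hP (by positivity)
    _ = _ := by field_simp

lemma tendsto_lamk_atTop {k : ℕ} (hk : 1 ≤ k) : Tendsto (fun a => lamk k a) atTop atTop := by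
  refine tendsto_atTop_mono' atTop ?_
    ((tendsto_pow_atTop (α := ℝ) (n := 4) (by norm_num)).atTop_div_const (r := 16) (by norm_num))
  filter_upwards [eventually_gt_atTop 0] with a ha using pow_four_div_le_lamk hk ha

lemma continuousAt_lamk {k : ℕ} (hk : 1 ≤ k) {a : ℝ} (ha : 0 < a) :
    ContinuousAt (fun a => lamk k a) a := by
  let M : ℝ → ℝ := fun b => max 1 (max ((a / b) ^ 4) ((b / a) ^ 4))
  have hM : Tendsto M (nhds a) (nhds 1) := by
    have hc : ContinuousAt M a := by
      have := ha.ne'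
      fun_prop (disch := assumption)
    have hMa : M a = 1 := by simp [M, div_self ha.ne']
    simpa [ContinuousAt, hMa] using hc
  have hlow : Tendsto (fun b => lamk k a / M b) (nhds a) (nhds (lamk k a)) := by
    simpa [Pi.div_def] using (tendsto_const_nhds (x := lamk k a)).div hM one_ne_zero
  have hup : Tendsto (fun b => M b * lamk k a) (nhds a) (nhds (lamk k a)) := by
    simpa using hM.mul_const (lamk k a)
  have hM1 : ∀ b, 1 ≤ M b := fun b => le_max_left _ _
  have hM2 : ∀ b, (a / b) ^ 4 ≤ M b := fun b => (le_max_left _ _).trans (le_max_right _ _)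
  have hM3 : ∀ b, (b / a) ^ 4 ≤ M b := fun b => (le_max_right _ _).trans (le_max_right _ _)
  refine tendsto_of_tendsto_of_tendsto_of_le_of_le' hlow hup ?_ ?_
  · filter_upwards [lt_mem_nhds ha] with b hb
    rw [div_le_iff₀' (one_pos.trans_le (hM1 b))]
    exact lamk_le_mul hk hb ha (hM1 b) (hM3 b) (hM2 b)
  · filter_upwards [lt_mem_nhds ha] with b hb
    exact lamk_le_mul hk ha hb (hM1 b) (hM2 b) (hM3 b)


/-- The infimum of `λ_k` over rectangles of unit area is attained; in
particular `λ_k(a) → ∞` as `a → ∞`. -/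
theorem biharmonic_minimiser_exists (k : ℕ) (hk : 1 ≤ k) :
    (∃ astar : ℝ, 1 ≤ astar ∧
      lamk k astar = sInf { μ | ∃ a : ℝ, 1 ≤ a ∧ μ = lamk k a }) ∧
    Filter.Tendsto (fun a : ℝ => lamk k a) Filter.atTop Filter.atTop := by
  refine ⟨?_, tendsto_lamk_atTop hk⟩
  have hcont : ContinuousOn (fun a => lamk k a) (Set.Ici 1) := fun a ha =>
    (continuousAt_lamk hk (one_pos.trans_le ha)).continuousWithinAt
  obtain ⟨a, ha, hmin⟩ := hcont.exists_isMinOn' isClosed_Ici (Set.self_mem_Ici (a := (1 : ℝ))) (by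
    rw [cocompact_eq_atBot_atTop, inf_sup_right, eventually_sup]
    refine ⟨?_, ((tendsto_lamk_atTop hk).eventually_ge_atTop _).filter_mono inf_le_left⟩
    rw [eventually_inf_principal]
    filter_upwards [eventually_lt_atBot 1] with x hx hx'
    exact absurd hx' (not_le.2 hx))
  refine ⟨a, ha, le_antisymm (le_csInf ⟨_, a, ha, rfl⟩ ?_) (csInf_le ⟨0, ?_⟩ ⟨a, ha, rfl⟩)⟩
  · rintro _ ⟨b, hb, rfl⟩
    exact hmin hb
  · rintro _ ⟨b, -, rfl⟩
    exact lamk_nonneg k b
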